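/- Let G be a finitely generated group, let N ⊴ G be a normal subgroup, and let ψ be an automorphism of G with ψ(N) = N. Let ψ̄ denote the induced automorphism of G/N. Then gr_{ψ,G} ≻ gr_{ψ̄,G/N}. If moreover there exists a constant C such that for every g ∈ G the set {[ng]_ψ : n ∈ N} of ψ-twisted conjugacy classes is finite of size at most C, then gr_{ψ,G} ≃ gr_{ψ̄,G/N}. -/

import Mathlib

/-- Word norm with respect to a finite generating set (inverses of generators allowed). -/
noncomputable def wordNorm {G : Type*} [Group G] (S : Finset G) (g : G) : ℕ :=
  sInf {n | ∃ l : List G, l.length = n ∧ (∀ x ∈ l, x ∈ S ∨ x⁻¹ ∈ S) ∧ l.prod = g}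

/-- `x` and `y` are `ψ`-twisted conjugate. -/
def TwistedConj {G : Type*} [Group G] (ψ : G ≃* G) (x y : G) : Prop :=
  ∃ g : G, g * x * (ψ g)⁻¹ = y

/-- The twisted conjugacy growth function: number of `ψ`-twisted conjugacy classes
with a representative of word norm at most `n`. -/
noncomputable def twistedGrowth {G : Type*} [Group G] (ψ : G ≃* G) (S : Finset G) (n : ℕ) : ℕ :=
  Set.ncard ((fun x => {y | TwistedConj ψ x y}) '' {g : G | wordNorm S g ≤ n})

def GrowthLE (f g : ℕ → ℝ) : Prop :=
  ∃ c : ℕ, 0 < c ∧ ∀ n : ℕ, max 1 (f n) ≤ c * max 1 (g (c * n))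

def GrowthEquiv (f g : ℕ → ℝ) : Prop := GrowthLE f g ∧ GrowthLE g f

/-! The projection `π : G → G ⧸ N` maps each `ψ`-twisted class onto a `ψ̄`-twisted class. It
distorts word norms at most linearly, and every element of the quotient has a lift of linearly
bounded norm, obtained by lifting a geodesic word letter by letter. So the classes meeting a ball
of `G ⧸ N` are images of classes meeting a linearly larger ball of `G`. Conversely, a class of `G`
lying over `[π g]` contains a point over `π g` itself, that is, a point of the coset `N g`, so `C`
bounds the number of classes of `G` over each class of the quotient. -/

open Function Set

/-- The `ψ`-twisted conjugacy class `[x]_ψ`, as a subset of `G`. -/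
def twistedClass {G : Type*} [Group G] (ψ : G ≃* G) (x : G) : Set G :=
  {y | TwistedConj ψ x y}

/-- The ball of radius `n` around the identity in the word norm of `S`. When `S` does not generate,
it contains all elements outside the subgroup generated by `S`, as these have junk norm `0`. -/
def wordBall {G : Type*} [Group G] (S : Finset G) (n : ℕ) : Set G :=
  {g | wordNorm S g ≤ n}

section WordNorm

variable {G H : Type*} [Group G] [Group H] {S : Finset G} {T : Finset H}

theorem wordNorm_prod_le_length {l : List G} (hl : ∀ x ∈ l, x ∈ S ∨ x⁻¹ ∈ S) :
    wordNorm S l.prod ≤ l.length :=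
  Nat.sInf_le ⟨l, rfl, hl, rfl⟩

theorem wordNorm_one : wordNorm S 1 = 0 :=
  Nat.le_zero.mp (wordNorm_prod_le_length (l := []) (by simp))

theorem exists_list_length_eq_wordNorm (hS : Subgroup.closure (S : Set G) = ⊤) (g : G) :
    ∃ l : List G, l.length = wordNorm S g ∧ (∀ x ∈ l, x ∈ S ∨ x⁻¹ ∈ S) ∧ l.prod = g := by
  have hg : g ∈ Submonoid.closure ((S : Set G) ∪ (S : Set G)⁻¹) := by
    rw [← Subgroup.closure_toSubmonoid, hS]
    exact Subgroup.mem_top g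
  obtain ⟨l, hl, hprod⟩ := Submonoid.exists_list_of_mem_closure hg
  exact Nat.sInf_mem
    (s := {n | ∃ l : List G, l.length = n ∧ (∀ x ∈ l, x ∈ S ∨ x⁻¹ ∈ S) ∧ l.prod = g})
    ⟨l.length, l, rfl, hl, hprod⟩

theorem wordNorm_mul_le (hS : Subgroup.closure (S : Set G) = ⊤) (g h : G) :
    wordNorm S (g * h) ≤ wordNorm S g + wordNorm S h := by
  obtain ⟨l, hl_length, hl, rfl⟩ := exists_list_length_eq_wordNorm hS g
  obtain ⟨m, hm_length, hm, rfl⟩ := exists_list_length_eq_wordNorm hS h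
  rw [← hl_length, ← hm_length, ← List.length_append, ← List.prod_append]
  exact wordNorm_prod_le_length (List.forall_mem_append.mpr ⟨hl, hm⟩)

theorem wordNorm_prod_le_mul_length (hS : Subgroup.closure (S : Set G) = ⊤) {c : ℕ} {l : List G}
    (hl : ∀ x ∈ l, wordNorm S x ≤ c) : wordNorm S l.prod ≤ c * l.length := by
  induction l with
  | nil => simp [wordNorm_one]
  | cons a l ih =>
    obtain ⟨ha, hl⟩ := List.forall_mem_cons.mp hl
    calc wordNorm S (a :: l).prod
        ≤ wordNorm S a + wordNorm S l.prod := by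
          rw [List.prod_cons]
          exact wordNorm_mul_le hS a l.prod
      _ ≤ c + c * l.length := Nat.add_le_add ha (ih hl)
      _ = c * (a :: l).length := by rw [List.length_cons]; ring

theorem finite_setOf_mem_or_inv_mem (S : Finset G) : {x : G | x ∈ S ∨ x⁻¹ ∈ S}.Finite :=
  S.finite_toSet.union S.finite_toSet.inv

theorem finite_wordBall (hS : Subgroup.closure (S : Set G) = ⊤) (n : ℕ) :
    (wordBall S n).Finite := by
  have := (finite_setOf_mem_or_inv_mem S).to_subtype
  refine ((List.finite_length_le {x : G | x ∈ S ∨ x⁻¹ ∈ S} n).image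
    fun l => (l.map Subtype.val).prod).subset fun g hg => ?_
  obtain ⟨l, hl_length, hl, rfl⟩ := exists_list_length_eq_wordNorm hS g
  lift l to List {x : G | x ∈ S ∨ x⁻¹ ∈ S} using hl
  rw [List.length_map] at hl_length
  exact ⟨l, hl_length.trans_le hg, rfl⟩

theorem exists_wordNorm_map_prod_le (hT : Subgroup.closure (T : Set H) = ⊤)
    (hS : Subgroup.closure (S : Set G) = ⊤) (f : G → H) :
    ∃ c, ∀ g, ∃ l : List G, l.prod = g ∧ wordNorm T (l.map f).prod ≤ c * wordNorm S g := by
  obtain ⟨c, hc⟩ := ((finite_setOf_mem_or_inv_mem S).image (wordNorm T ∘ f)).bddAbove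
  refine ⟨c, fun g => ?_⟩
  obtain ⟨l, hl_length, hl, hprod⟩ := exists_list_length_eq_wordNorm hS g
  refine ⟨l, hprod, ?_⟩
  rw [← hl_length, ← l.length_map f]
  exact wordNorm_prod_le_mul_length hT <|
    List.forall_mem_map.mpr fun x hx => hc (mem_image_of_mem _ (hl x hx))

theorem exists_mapsTo_wordBall (hS : Subgroup.closure (S : Set G) = ⊤)
    (hT : Subgroup.closure (T : Set H) = ⊤) (π : G →* H) :
    ∃ c, ∀ n, MapsTo π (wordBall S n) (wordBall T (c * n)) := by
  obtain ⟨c, hc⟩ := exists_wordNorm_map_prod_le hT hS π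
  refine ⟨c, fun n g hg => ?_⟩
  obtain ⟨l, rfl, hl⟩ := hc g
  rw [← map_list_prod] at hl
  exact hl.trans (Nat.mul_le_mul_left c hg)

theorem exists_surjOn_wordBall (hS : Subgroup.closure (S : Set G) = ⊤)
    (hT : Subgroup.closure (T : Set H) = ⊤) {π : G →* H} (hπ : Surjective π) :
    ∃ c, ∀ n, SurjOn π (wordBall S (c * n)) (wordBall T n) := by
  obtain ⟨σ, hσ⟩ := hπ.hasRightInverse
  obtain ⟨c, hc⟩ := exists_wordNorm_map_prod_le hS hT σ
  refine ⟨c, fun n h hh => ?_⟩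
  obtain ⟨l, rfl, hl⟩ := hc h
  refine ⟨(l.map σ).prod, hl.trans (Nat.mul_le_mul_left c hh), ?_⟩
  rw [map_list_prod, List.map_map, hσ.comp_eq_id, List.map_id]

end WordNorm

section TwistedClass

variable {G H : Type*} [Group G] [Group H] {ψ : G ≃* G} {φ : H ≃* H} {π : G →* H}

theorem mem_twistedClass_self (x : G) : x ∈ twistedClass ψ x :=
  ⟨1, by simp⟩

theorem twistedClass_eq_of_mem {x y : G} (h : y ∈ twistedClass ψ x) :
    twistedClass ψ y = twistedClass ψ x := by
  obtain ⟨g, rfl⟩ := h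
  ext z
  constructor
  · rintro ⟨k, rfl⟩
    exact ⟨k * g, by simp [mul_assoc]⟩
  · rintro ⟨k, rfl⟩
    exact ⟨k * g⁻¹, by simp [mul_assoc]⟩

theorem image_twistedClass (hπ : Surjective π) (hψφ : Semiconj π ψ φ) (x : G) :
    π '' twistedClass ψ x = twistedClass φ (π x) := by
  have map_twist (g : G) : π (g * x * (ψ g)⁻¹) = π g * π x * (φ (π g))⁻¹ := by
    rw [map_mul, map_mul, map_inv, hψφ g]
  ext y
  constructor
  · rintro ⟨_, ⟨g, rfl⟩, rfl⟩
    exact ⟨π g, (map_twist g).symm⟩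
  · rintro ⟨h, rfl⟩
    obtain ⟨g, rfl⟩ := hπ h
    exact ⟨_, ⟨g, rfl⟩, map_twist g⟩

theorem mem_image_twistedClass_preimage_of_image_eq {x : G} {h : H}
    (hx : π '' twistedClass ψ x = twistedClass φ h) :
    twistedClass ψ x ∈ twistedClass ψ '' (π ⁻¹' {h}) := by
  obtain ⟨y, hy, hyh⟩ : h ∈ π '' twistedClass ψ x := hx ▸ mem_twistedClass_self h
  exact ⟨y, hyh, twistedClass_eq_of_mem hy⟩

end TwistedClass

theorem ncard_le_mul_ncard_of_mapsTo {α β : Type*} {f : α → β} {s : Set α} {t : Set β} {k : ℕ}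
    (hs : s.Finite) (ht : t.Finite) (hf : MapsTo f s t)
    (hk : ∀ b ∈ t, (s ∩ f ⁻¹' {b}).ncard ≤ k) : s.ncard ≤ k * t.ncard := by
  classical
  lift s to Finset α using hs
  lift t to Finset β using ht
  rw [ncard_coe_finset, ncard_coe_finset]
  refine Finset.card_le_mul_card_image_of_maps_to hf k fun b hb => ?_
  rw [← ncard_coe_finset, Finset.coe_filter]
  exact hk b hb

section Growth

theorem growthLE_of_le_mul {f g : ℕ → ℕ} (hg : Monotone g) {k c : ℕ}
    (h : ∀ n, f n ≤ k * g (c * n)) : GrowthLE (fun n => (f n : ℝ)) (fun n => (g n : ℝ)) := by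
  refine ⟨k + c + 1, by omega, fun n => ?_⟩
  suffices max 1 (f n) ≤ (k + c + 1) * max 1 (g ((k + c + 1) * n)) by
    beta_reduce
    exact_mod_cast this
  refine max_le (Nat.mul_pos (by omega) (by omega)) ?_
  calc f n ≤ k * g (c * n) := h n
    _ ≤ (k + c + 1) * g ((k + c + 1) * n) :=
      Nat.mul_le_mul (by omega) (hg (Nat.mul_le_mul_right n (by omega)))
    _ ≤ (k + c + 1) * max 1 (g ((k + c + 1) * n)) := Nat.mul_le_mul_left _ (le_max_right _ _)

variable {G H : Type*} [Group G] [Group H] {S : Finset G} {T : Finset H}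
  {ψ : G ≃* G} {φ : H ≃* H} {π : G →* H}

theorem twistedGrowth_eq_ncard (ψ : G ≃* G) (S : Finset G) (n : ℕ) :
    twistedGrowth ψ S n = (twistedClass ψ '' wordBall S n).ncard :=
  rfl

theorem twistedGrowth_mono (ψ : G ≃* G) (hS : Subgroup.closure (S : Set G) = ⊤) :
    Monotone (twistedGrowth ψ S) := fun _ n hmn =>
  ncard_le_ncard (image_mono fun _ hg => le_trans hg hmn) ((finite_wordBall hS n).image _)

theorem growthLE_twistedGrowth_of_surjective (hS : Subgroup.closure (S : Set G) = ⊤)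
    (hT : Subgroup.closure (T : Set H) = ⊤) (hπ : Surjective π) (hψφ : Semiconj π ψ φ) :
    GrowthLE (fun n => (twistedGrowth φ T n : ℝ)) (fun n => (twistedGrowth ψ S n : ℝ)) := by
  obtain ⟨c, hc⟩ := exists_surjOn_wordBall hS hT hπ
  refine growthLE_of_le_mul (k := 1) (c := c) (twistedGrowth_mono ψ hS) fun n => ?_
  have classes_finite := (finite_wordBall hS (c * n)).image (twistedClass ψ)
  have classes_subset : twistedClass φ '' wordBall T n ⊆
      image π '' (twistedClass ψ '' wordBall S (c * n)) := by
    rintro _ ⟨h, hh, rfl⟩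
    obtain ⟨g, hg, rfl⟩ := hc n hh
    exact ⟨_, mem_image_of_mem _ hg, image_twistedClass hπ hψφ g⟩
  rw [one_mul, twistedGrowth_eq_ncard, twistedGrowth_eq_ncard]
  exact (ncard_le_ncard classes_subset (classes_finite.image _)).trans
    (ncard_image_le classes_finite)

theorem growthLE_twistedGrowth_of_encard_fiber_le (hS : Subgroup.closure (S : Set G) = ⊤)
    (hT : Subgroup.closure (T : Set H) = ⊤) (hπ : Surjective π) (hψφ : Semiconj π ψ φ) {C : ℕ}
    (hC : ∀ h, (twistedClass ψ '' (π ⁻¹' {h})).encard ≤ C) :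
    GrowthLE (fun n => (twistedGrowth ψ S n : ℝ)) (fun n => (twistedGrowth φ T n : ℝ)) := by
  obtain ⟨c, hc⟩ := exists_mapsTo_wordBall hS hT π
  refine growthLE_of_le_mul (k := C) (c := c) (twistedGrowth_mono φ hT) fun n => ?_
  refine ncard_le_mul_ncard_of_mapsTo (f := image π) ((finite_wordBall hS n).image _)
    ((finite_wordBall hT (c * n)).image _) ?_ ?_
  · rintro _ ⟨g, hg, rfl⟩
    exact ⟨π g, hc n hg, (image_twistedClass hπ hψφ g).symm⟩
  · rintro _ ⟨h, -, rfl⟩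
    obtain ⟨fiber_finite, fiber_ncard⟩ := encard_le_coe_iff_finite_ncard_le.mp (hC h)
    refine (ncard_le_ncard ?_ fiber_finite).trans fiber_ncard
    rintro _ ⟨⟨x, -, rfl⟩, hx⟩
    exact mem_image_twistedClass_preimage_of_image_eq hx

end Growth

theorem image_mul_right_eq_preimage_mk' {G : Type*} [Group G] (N : Subgroup G) [N.Normal] (g : G) :
    (· * g) '' (N : Set G) = QuotientGroup.mk' N ⁻¹' {QuotientGroup.mk' N g} := by
  ext x
  rw [image_mul_right, mem_preimage, SetLike.mem_coe, ← div_eq_mul_inv,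
    ← QuotientGroup.eq_iff_div_mem]
  rfl

/-- Twisted conjugacy growth and quotients: `gr_{ψ,G} ≻ gr_{ψ̄,G/N}`, with equality
up to `≃` when the twisted classes of the cosets `Ng` are uniformly boundedly many. -/
theorem twisted_growth_quotient
    (G : Type*) [Group G] (N : Subgroup G) [N.Normal]
    (ψ : G ≃* G) (hψN : Subgroup.map ψ.toMonoidHom N = N)
    (S : Finset G) (hS : Subgroup.closure (S : Set G) = ⊤)
    (T : Finset (G ⧸ N)) (hT : Subgroup.closure (T : Set (G ⧸ N)) = ⊤) :
    GrowthLE (fun n => (twistedGrowth (QuotientGroup.congr N N ψ hψN) T n : ℝ))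
      (fun n => (twistedGrowth ψ S n : ℝ)) ∧
    ((∃ C : ℕ, ∀ g : G,
        ((fun m : G => {y | TwistedConj ψ (m * g) y}) '' (N : Set G)).Finite ∧
        Set.ncard ((fun m : G => {y | TwistedConj ψ (m * g) y}) '' (N : Set G)) ≤ C) →
      GrowthEquiv (fun n => (twistedGrowth ψ S n : ℝ))
        (fun n => (twistedGrowth (QuotientGroup.congr N N ψ hψN) T n : ℝ))) := by
  have hπ := QuotientGroup.mk'_surjective N
  have hψφ : Semiconj (QuotientGroup.mk' N) ψ (QuotientGroup.congr N N ψ hψN) :=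
    fun g => (QuotientGroup.congr_mk' N N ψ hψN g).symm
  have quotient_le := growthLE_twistedGrowth_of_surjective hS hT hπ hψφ
  refine ⟨quotient_le, fun ⟨C, hC⟩ => ⟨?_, quotient_le⟩⟩
  refine growthLE_twistedGrowth_of_encard_fiber_le hS hT hπ hψφ (C := C) (hπ.forall.mpr fun g => ?_)
  rw [← image_mul_right_eq_preimage_mk', image_image]
  exact encard_le_coe_iff_finite_ncard_le.mpr (hC g)
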